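/- (Norm duality formula.) Let n ∈ ℕ, p⃗, q⃗ ∈ [1,∞]^n and α⃗ ∈ ℝⁿ. Then for every f ∈ Ė^{α⃗,p⃗}_{q⃗}(ℝⁿ), ‖f‖_{Ė^{α⃗,p⃗}_{q⃗}(ℝⁿ)} = sup{ ‖fg‖_{L¹(ℝⁿ)} : g measurable with ‖g‖_{Ė^{-α⃗,p⃗'}_{q⃗'}(ℝⁿ)} = 1 }. -/

import Mathlib

open MeasureTheory ENNReal Filter

noncomputable section

/-- The dyadic annulus `R_k = (-2^k, 2^k) \ (-2^(k-1), 2^(k-1))` in `ℝ`. -/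
def herzRing (k : ℤ) : Set ℝ :=
  Set.Ioo (-(2 : ℝ) ^ k) ((2 : ℝ) ^ k) \ Set.Ioo (-(2 : ℝ) ^ (k - 1)) ((2 : ℝ) ^ (k - 1))

/-- The `L^q` "norm" (valued in `ℝ≥0∞`) of an `ℝ≥0∞`-valued function on a set `s ⊆ ℝ`,
with the usual modification when `q = ∞`. -/
def lqNormOn (q : ℝ≥0∞) (s : Set ℝ) (g : ℝ → ℝ≥0∞) : ℝ≥0∞ :=
  if q = ∞ then essSup (s.indicator g) volume
  else (∫⁻ x in s, g x ^ q.toReal) ^ (1 / q.toReal)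

/-- The `l^p` norm over `ℤ` of an `ℝ≥0∞`-valued sequence, with the usual modification
when `p = ∞`. -/
def lpZNorm (p : ℝ≥0∞) (a : ℤ → ℝ≥0∞) : ℝ≥0∞ :=
  if p = ∞ then ⨆ k, a k
  else (∑' k : ℤ, a k ^ p.toReal) ^ (1 / p.toReal)

/-- The one-dimensional Herz norm `K^{α,p}_q` of an `ℝ≥0∞`-valued function on `ℝ`. -/
def herzNorm1 (α : ℝ) (p q : ℝ≥0∞) (g : ℝ → ℝ≥0∞) : ℝ≥0∞ :=
  lpZNorm p fun k => ENNReal.ofReal ((2 : ℝ) ^ ((k : ℝ) * α)) * lqNormOn q (herzRing k) g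

/-- The mixed-norm Herz norm on `ℝⁿ` of an `ℝ≥0∞`-valued function: the Herz norm
`K^{α_1,p_1}_{q_1}` is applied in the first variable, then `K^{α_2,p_2}_{q_2}` in the
second variable, …, and finally `K^{α_n,p_n}_{q_n}` in the last variable. -/
def mixedHerzNormE : (n : ℕ) → (Fin n → ℝ) → (Fin n → ℝ≥0∞) → (Fin n → ℝ≥0∞) →
    ((Fin n → ℝ) → ℝ≥0∞) → ℝ≥0∞
  | 0, _, _, _, f => f fun i => i.elim0
  | n + 1, α, p, q, f =>
    herzNorm1 (α (Fin.last n)) (p (Fin.last n)) (q (Fin.last n)) fun xlast =>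
      mixedHerzNormE n (Fin.init α) (Fin.init p) (Fin.init q) fun y => f (Fin.snoc y xlast)

/-- The mixed-norm Herz norm `‖f‖_{Ė^{α,p}_q(ℝⁿ)}` of a complex-valued function on `ℝⁿ`. -/
def herzNormC (n : ℕ) (α : Fin n → ℝ) (p q : Fin n → ℝ≥0∞) (f : (Fin n → ℝ) → ℂ) : ℝ≥0∞ :=
  mixedHerzNormE n α p q fun x => (‖f x‖₊ : ℝ≥0∞)

/-- `I_m = (-2^m, -2^{-m}] ∪ [2^{-m}, 2^m)`. -/
def herzI (m : ℕ) : Set ℝ :=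
  Set.Ioc (-(2 : ℝ) ^ (m : ℤ)) (-(2 : ℝ) ^ (-(m : ℤ))) ∪
    Set.Ico ((2 : ℝ) ^ (-(m : ℤ))) ((2 : ℝ) ^ (m : ℤ))

/-- `A_m = I_m^n ⊆ ℝⁿ`. -/
def herzA (n m : ℕ) : Set (Fin n → ℝ) := Set.univ.pi fun _ => herzI m

/-- The class `H(ℝⁿ)` of simple functions built from finitely many pairwise disjoint
parallelepipeds contained in some `A_m`. -/
def IsHSimple (n : ℕ) (f : (Fin n → ℝ) → ℂ) : Prop :=
  ∃ (m N : ℕ) (a : Fin N → ℂ) (E : Fin N → Fin n → Set ℝ),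
    (∀ k i, MeasurableSet (E k i)) ∧
    (∀ k, Set.univ.pi (E k) ⊆ herzA n m) ∧
    (Pairwise fun k l => Disjoint (Set.univ.pi (E k)) (Set.univ.pi (E l))) ∧
    f = fun x => ∑ k, (Set.univ.pi (E k)).indicator (fun _ => a k) x

/-- The Euclidean ball `B(x,r)` in `ℝⁿ`. -/
def eucBall (n : ℕ) (x : Fin n → ℝ) (r : ℝ) : Set (Fin n → ℝ) :=
  {y | ∑ i, (y i - x i) ^ 2 < r ^ 2}

/-- The (uncentered) maximal operator in the `k`-th variable. -/
def maxVar (n : ℕ) (k : Fin n) (g : (Fin n → ℝ) → ℝ≥0∞) : (Fin n → ℝ) → ℝ≥0∞ :=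
  fun x => ⨆ (a : ℝ) (b : ℝ) (_ : x k ∈ Set.Ioo a b),
    (volume (Set.Ioo a b))⁻¹ * ∫⁻ y in Set.Ioo a b, g (Function.update x k y)

/-- The centered Hardy–Littlewood maximal operator on `ℝⁿ`. -/
def centeredMax (n : ℕ) (g : (Fin n → ℝ) → ℝ≥0∞) : (Fin n → ℝ) → ℝ≥0∞ :=
  fun x => ⨆ (r : ℝ) (_ : 0 < r),
    (volume (eucBall n x r))⁻¹ * ∫⁻ y in eucBall n x r, g y

/-- The composition `M_n ∘ ⋯ ∘ M_1` of the maximal operators in each variable. -/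
def iteratedMax (n : ℕ) (g : (Fin n → ℝ) → ℝ≥0∞) : (Fin n → ℝ) → ℝ≥0∞ :=
  (List.ofFn fun k : Fin n => maxVar n k).foldl (fun h F => F h) g

/-- The iterated maximal operator `ℳ_t(f) = [M_n ⋯ M_1(|f|^t)]^{1/t}`. -/
def iterMaxPow (n : ℕ) (t : ℝ) (f : (Fin n → ℝ) → ℂ) : (Fin n → ℝ) → ℝ≥0∞ :=
  fun x => iteratedMax n (fun y => (‖f y‖₊ : ℝ≥0∞) ^ t) x ^ (1 / t)

/-- The `l^r`-Herz type mixed norm of a sequence of functions on `ℝⁿ`. -/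
def herzSeqNorm (n : ℕ) (r : ℝ≥0∞) (α : Fin n → ℝ) (p q : Fin n → ℝ≥0∞)
    (F : ℤ → (Fin n → ℝ) → ℂ) : ℝ≥0∞ :=
  mixedHerzNormE n α p q fun x => lpZNorm r fun j => (‖F j x‖₊ : ℝ≥0∞)

/-- `N` is a ball quasi-Banach function norm on (nonnegative extended-real-valued)
measurable functions on `ℝⁿ`. -/
def IsBQBFNorm (n : ℕ) (N : ((Fin n → ℝ) → ℝ≥0∞) → ℝ≥0∞) : Prop :=
  (∀ f : (Fin n → ℝ) → ℝ≥0∞, Measurable f → N f = 0 → f =ᵐ[volume] 0) ∧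
  (∀ f g : (Fin n → ℝ) → ℝ≥0∞, Measurable f → Measurable g →
    (∀ᵐ x ∂volume, g x ≤ f x) → N g ≤ N f) ∧
  (∀ (fm : ℕ → (Fin n → ℝ) → ℝ≥0∞) (f : (Fin n → ℝ) → ℝ≥0∞),
    (∀ m, Measurable (fm m)) → Measurable f →
    (∀ᵐ x ∂volume, Monotone (fun m => fm m x) ∧
      Tendsto (fun m => fm m x) atTop (nhds (f x))) →
    Monotone (fun m => N (fm m)) ∧ Tendsto (fun m => N (fm m)) atTop (nhds (N f))) ∧
  (∀ (x : Fin n → ℝ) (r : ℝ), 0 < r →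
    N ((eucBall n x r).indicator fun _ => (1 : ℝ≥0∞)) ≠ ∞)

/-- `N` is a ball Banach function norm: a ball quasi-Banach function norm that moreover
satisfies the triangle inequality and locally dominates the `L¹` norm. -/
def IsBallBanachNorm (n : ℕ) (N : ((Fin n → ℝ) → ℝ≥0∞) → ℝ≥0∞) : Prop :=
  IsBQBFNorm n N ∧
  (∀ f g : (Fin n → ℝ) → ℝ≥0∞, Measurable f → Measurable g → N (f + g) ≤ N f + N g) ∧
  (∀ (x : Fin n → ℝ) (r : ℝ), 0 < r → ∃ C : ℝ≥0∞, 0 < C ∧ C ≠ ∞ ∧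
    ∀ f : (Fin n → ℝ) → ℝ≥0∞, Measurable f → (∫⁻ y in eucBall n x r, f y) ≤ C * N f)

/-- The associate (Köthe dual) norm of a function norm `N`. -/
def assocNormOf (n : ℕ) (N : ((Fin n → ℝ) → ℝ≥0∞) → ℝ≥0∞)
    (f : (Fin n → ℝ) → ℝ≥0∞) : ℝ≥0∞ :=
  ⨆ (g : (Fin n → ℝ) → ℝ≥0∞) (_ : Measurable g) (_ : N g = 1), ∫⁻ x, f x * g x

/-- The `θ`-convexification of a function norm: `‖f‖_{X^θ} = ‖|f|^θ‖_X^{1/θ}`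
(here stated with `θ` in place of `1/p`, so `X^{1/p}` is `convexPow n (1/p) N`). -/
def convexPow (n : ℕ) (θ : ℝ) (N : ((Fin n → ℝ) → ℝ≥0∞) → ℝ≥0∞)
    (f : (Fin n → ℝ) → ℝ≥0∞) : ℝ≥0∞ :=
  N (fun x => f x ^ θ) ^ (1 / θ)

/-- The associate space norm of the mixed-norm Herz space, for complex-valued functions. -/
def herzAssocNormC (n : ℕ) (α : Fin n → ℝ) (p q : Fin n → ℝ≥0∞)
    (f : (Fin n → ℝ) → ℂ) : ℝ≥0∞ :=
  ⨆ (g : (Fin n → ℝ) → ℂ) (_ : Measurable g) (_ : herzNormC n α p q g = 1),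
    ∫⁻ x, (‖f x * g x‖₊ : ℝ≥0∞)

/-- basic properties of a function norm -/
structure FN {X : Type} [MeasurableSpace X] (N : (X → ℝ≥0∞) → ℝ≥0∞) : Prop where
  mono : ∀ f g : X → ℝ≥0∞, (∀ x, f x ≤ g x) → N f ≤ N g
  hom : ∀ (c : ℝ≥0∞) (f : X → ℝ≥0∞), Measurable f → N (fun x => c * f x) ≤ c * N f
  meas : ∀ (Y : Type) [MeasurableSpace Y] (F : Y → X → ℝ≥0∞),
    Measurable (Function.uncurry F) → Measurable fun y => N (F y)

/-- a pair of norms in duality -/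
structure DP {X : Type} [MeasurableSpace X] (μ : Measure X) (N N' : (X → ℝ≥0∞) → ℝ≥0∞) :
    Prop where
  hN : FN N
  hN' : FN N'
  holder : ∀ f g : X → ℝ≥0∞, Measurable f → Measurable g → ∫⁻ x, f x * g x ∂μ ≤ N f * N' g
  approx : ∀ (Y : Type) [MeasurableSpace Y] (F : Y → X → ℝ≥0∞),
    Measurable (Function.uncurry F) → ∃ G : ℕ → Y → X → ℝ≥0∞,
      (∀ k, Measurable (Function.uncurry (G k))) ∧ (∀ k y, N' (G k y) ≤ 1) ∧
      ∀ y, N (F y) ≤ ⨆ k, ∫⁻ x, F y x * G k y x ∂μ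

/-- the Lebesgue norm -/
def LN {X : Type} [MeasurableSpace X] (q : ℝ≥0∞) (μ : Measure X) (f : X → ℝ≥0∞) : ℝ≥0∞ :=
  if q = ∞ then essSup f μ else (∫⁻ x, f x ^ q.toReal ∂μ) ^ (1 / q.toReal)

lemma lt_essSup_iff' {X : Type} [MeasurableSpace X] (μ : Measure X) (f : X → ℝ≥0∞) (r : ℝ≥0∞) :
    r < essSup f μ ↔ 0 < μ {x | r < f x} := by
  constructor
  · intro h
    rw [pos_iff_ne_zero]
    intro h0
    refine absurd h (not_lt.2 (essSup_le_of_ae_le r ?_))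
    rw [Filter.EventuallyLE, ae_iff]
    simpa using h0
  · intro h
    by_contra h'
    rw [not_lt] at h'
    refine h.ne' ?_
    have := ENNReal.ae_le_essSup (μ := μ) f
    have h2 : ∀ᵐ x ∂μ, f x ≤ r := this.mono fun x hx => hx.trans h'
    rw [ae_iff] at h2
    simpa using h2

lemma LN_const_mul {X : Type} [MeasurableSpace X] (μ : Measure X) {q : ℝ≥0∞} (hq : q ≠ 0)
    (c : ℝ≥0∞) (f : X → ℝ≥0∞) (h : c ≠ ∞ ∨ Measurable f) :
    LN q μ (fun x => c * f x) = c * LN q μ f := by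
  unfold LN
  split_ifs with hi
  · exact ENNReal.essSup_const_mul
  · have hpos : 0 < q.toReal := ENNReal.toReal_pos hq hi
    simp_rw [ENNReal.mul_rpow_of_nonneg _ _ hpos.le]
    have : ∫⁻ x, c ^ q.toReal * f x ^ q.toReal ∂μ = c ^ q.toReal * ∫⁻ x, f x ^ q.toReal ∂μ := by
      rcases h with h | h
      · exact lintegral_const_mul' _ _ (ENNReal.rpow_ne_top_of_nonneg hpos.le h)
      · exact lintegral_const_mul _ (h.pow_const _)
    rw [this, ENNReal.mul_rpow_of_nonneg _ _ (by positivity), ← ENNReal.rpow_mul,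
      mul_one_div_cancel hpos.ne', ENNReal.rpow_one]

lemma LN_FN {X : Type} [MeasurableSpace X] (μ : Measure X) [SFinite μ] {q : ℝ≥0∞} (hq : q ≠ 0) :
    FN (LN q μ) where
  mono f g h := by
    unfold LN
    split_ifs with hi
    · exact essSup_mono_ae (Eventually.of_forall h)
    · gcongr
      exact h _
  hom c f hf := (LN_const_mul μ hq c f (Or.inr hf)).le
  meas Y _ F hF := by
    unfold LN
    split_ifs with hi
    · refine measurable_of_Ioi fun r => ?_
      have : (fun y => essSup (F y) μ) ⁻¹' Set.Ioi r
          = (fun y => μ (Prod.mk y ⁻¹' {z : Y × X | r < Function.uncurry F z})) ⁻¹' Set.Ioi 0 := by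
        ext y
        simp only [Set.mem_preimage, Set.mem_Ioi]
        exact lt_essSup_iff' μ (F y) r
      rw [this]
      exact measurable_measure_prodMk_left (measurableSet_lt measurable_const hF) measurableSet_Ioi
    · refine Measurable.pow_const ?_ _
      exact Measurable.lintegral_prod_right' (f := fun z : Y × X => (Function.uncurry F z) ^ q.toReal)
        (hF.pow_const _)

lemma LN_one {X : Type} [MeasurableSpace X] (μ : Measure X) (f : X → ℝ≥0∞) :
    LN 1 μ f = ∫⁻ x, f x ∂μ := by simp [LN]

lemma LN_top {X : Type} [MeasurableSpace X] (μ : Measure X) (f : X → ℝ≥0∞) :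
    LN ∞ μ f = essSup f μ := by simp [LN]

lemma conj_cases {q q' : ℝ≥0∞} (hq : 1 ≤ q) (h : 1 / q + 1 / q' = 1) :
    (q = 1 ∧ q' = ∞) ∨ (q = ∞ ∧ q' = 1) ∨
      (q ≠ ∞ ∧ q' ≠ ∞ ∧ q.toReal.HolderConjugate q'.toReal) := by
  have hc : ENNReal.HolderConjugate q q' := by
    rw [ENNReal.holderConjugate_iff]; simpa using h
  by_cases h1 : q = ∞
  · right; left
    refine ⟨h1, ?_⟩
    subst h1
    simpa using h
  · by_cases h2 : q' = ∞
    · left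
      refine ⟨?_, h2⟩
      subst h2
      simpa using h
    · exact Or.inr (Or.inr ⟨h1, h2, ENNReal.HolderConjugate.toReal_of_ne_top h1 h2⟩)

lemma LN_holder {X : Type} [MeasurableSpace X] (μ : Measure X) {q q' : ℝ≥0∞}
    (hq : 1 ≤ q) (h : 1 / q + 1 / q' = 1) (f g : X → ℝ≥0∞) (hf : Measurable f) (hg : Measurable g) :
    ∫⁻ x, f x * g x ∂μ ≤ LN q μ f * LN q' μ g := by
  rcases conj_cases hq h with ⟨rfl, rfl⟩ | ⟨rfl, rfl⟩ | ⟨h1, h2, h3⟩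
  · rw [LN_one, LN_top, ← lintegral_mul_const _ hf]
    refine lintegral_mono_ae ?_
    filter_upwards [ENNReal.ae_le_essSup (μ := μ) g] with x hx
    gcongr
  · rw [LN_one, LN_top, ← lintegral_const_mul _ hg]
    refine lintegral_mono_ae ?_
    filter_upwards [ENNReal.ae_le_essSup (μ := μ) f] with x hx
    gcongr
  · simp only [LN, h1, h2, if_false]
    exact ENNReal.lintegral_mul_le_Lp_mul_Lq μ h3 hf.aemeasurable hg.aemeasurable

lemma LN_approx_top {X : Type} [MeasurableSpace X] (μ : Measure X) [SigmaFinite μ]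
    (Y : Type) [MeasurableSpace Y] (F : Y → X → ℝ≥0∞)
    (hF : Measurable (Function.uncurry F)) : ∃ G : ℕ → Y → X → ℝ≥0∞,
      (∀ k, Measurable (Function.uncurry (G k))) ∧ (∀ k y, LN 1 μ (G k y) ≤ 1) ∧
      ∀ y, LN ∞ μ (F y) ≤ ⨆ k, ∫⁻ x, F y x * G k y x ∂μ := by
  let ρ : ℚ → ℝ≥0∞ := fun r => ((Real.toNNReal (r : ℝ) : NNReal) : ℝ≥0∞)
  let A : ℚ × ℕ → Set (Y × X) := fun i =>
    {z | ρ i.1 < Function.uncurry F z} ∩ {z | z.2 ∈ spanningSets μ i.2}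
  have hA : ∀ i, MeasurableSet (A i) := fun i =>
    (measurableSet_lt measurable_const hF).inter
      (measurable_snd (measurableSet_spanningSets μ i.2))
  let B : ℚ × ℕ → Y → Set X := fun i y => Prod.mk y ⁻¹' (A i)
  have hB : ∀ i y, MeasurableSet (B i y) := fun i y => measurable_prodMk_left (hA i)
  let H : ℚ × ℕ → Y → X → ℝ≥0∞ := fun i y x =>
    (μ (B i y))⁻¹ * (A i).indicator (fun _ => 1) (y, x)
  have hHm : ∀ i, Measurable (Function.uncurry (H i)) := fun i =>
    ((measurable_measure_prodMk_left (hA i)).inv.comp measurable_fst).mul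
      (measurable_const.indicator (hA i))
  have hHi : ∀ i y x, H i y x = (B i y).indicator (fun _ => (μ (B i y))⁻¹) x := by
    intro i y x
    by_cases hx : x ∈ B i y
    · have : (y, x) ∈ A i := hx
      simp [H, hx, this]
    · have : (y, x) ∉ A i := hx
      simp [H, hx, this]
  obtain ⟨e⟩ : Nonempty (ℕ ≃ ℚ × ℕ) := ⟨(Denumerable.eqv _).symm⟩
  refine ⟨fun k => H (e k), fun k => hHm _, fun k y => ?_, fun y => ?_⟩
  · rw [LN_one]
    simp_rw [hHi]
    rw [lintegral_indicator (hB _ _), setLIntegral_const]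
    exact ENNReal.inv_mul_le_one _
  · rw [LN_top]
    refine le_of_forall_lt fun c hc => ?_
    obtain ⟨r, hr1, hr2⟩ : ∃ r : ℚ, c < ρ r ∧
        ρ r < essSup (F y) μ := by
      obtain ⟨r, hr0, h1, h2⟩ := ENNReal.lt_iff_exists_rat_btwn.1 hc
      exact ⟨r, h1, h2⟩
    refine hr1.trans_le ?_
    have hpos := (lt_essSup_iff' μ (F y) (ρ r)).1 hr2
    obtain ⟨m, hm⟩ : ∃ m, 0 < μ (B (r, m) y) := by
      by_contra hcon
      push Not at hcon
      refine hpos.ne' ?_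
      have : {x | ρ r < F y x} = ⋃ m, B (r, m) y := by
        ext x
        simp only [Set.mem_ofPred_eq, Set.mem_iUnion]
        constructor
        · intro hx
          exact ⟨_, hx, mem_spanningSetsIndex μ x⟩
        · rintro ⟨m, hm, -⟩
          exact hm
      rw [this]
      exact measure_iUnion_null fun m => le_antisymm (hcon m) (zero_le)
    have hfin : μ (B (r, m) y) ≠ ∞ :=
      ((measure_mono (fun x hx => hx.2)).trans_lt (measure_spanningSets_lt_top μ m)).ne
    refine le_trans ?_ (le_iSup _ (e.symm (r, m)))
    simp only [Equiv.apply_symm_apply]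
    calc ρ r = ∫⁻ x, (B (r, m) y).indicator
            (fun _ => ρ r * (μ (B (r, m) y))⁻¹) x ∂μ := by
          rw [lintegral_indicator (hB _ _), setLIntegral_const, mul_assoc,
            ENNReal.inv_mul_cancel hm.ne' hfin, mul_one]
      _ ≤ _ := by
          refine lintegral_mono fun x => ?_
          simp only [hHi]
          by_cases hx : x ∈ B (r, m) y
          · simp only [hx, Set.indicator_of_mem]
            gcongr
            exact hx.1.le
          · simp [hx]

lemma LN_approx_mid {X : Type} [MeasurableSpace X] (μ : Measure X) [SigmaFinite μ]
    {a b : ℝ} (hab : a.HolderConjugate b)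
    (Y : Type) [MeasurableSpace Y] (F : Y → X → ℝ≥0∞)
    (hF : Measurable (Function.uncurry F)) : ∃ G : ℕ → Y → X → ℝ≥0∞,
      (∀ k, Measurable (Function.uncurry (G k))) ∧
      (∀ k y, (∫⁻ x, G k y x ^ b ∂μ) ^ (1 / b) ≤ 1) ∧
      ∀ y, (∫⁻ x, F y x ^ a ∂μ) ^ (1 / a) ≤ ⨆ k, ∫⁻ x, F y x * G k y x ∂μ := by
  have ha := hab.pos
  have hb := hab.symm.pos
  have ha1 : 0 < a - 1 := hab.sub_one_pos
  let H : ℕ → Y → X → ℝ≥0∞ := fun k y x =>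
    (spanningSets μ k).indicator (fun x => min (F y x) k) x
  have hHm : ∀ k, Measurable (Function.uncurry (H k)) := by
    intro k
    have : Function.uncurry (H k) = (Prod.snd ⁻¹' spanningSets μ k).indicator
        (fun z : Y × X => min (Function.uncurry F z) k) := by
      ext ⟨y, x⟩
      by_cases hx : x ∈ spanningSets μ k <;> simp [H, Function.uncurry, hx]
    rw [this]
    exact (hF.min measurable_const).indicator (measurable_snd (measurableSet_spanningSets μ k))
  have hHs : ∀ k y, Measurable fun x => H k y x ^ a := fun k y =>
    ((hHm k).comp measurable_prodMk_left).pow_const _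
  let I : ℕ → Y → ℝ≥0∞ := fun k y => ∫⁻ x, H k y x ^ a ∂μ
  have hIm : ∀ k, Measurable (I k) := fun k =>
    Measurable.lintegral_prod_right' (f := fun z : Y × X => (Function.uncurry (H k) z) ^ a)
        ((hHm k).pow_const _)
  have hIfin : ∀ k y, I k y ≠ ∞ := by
    intro k y
    refine ne_of_lt ?_
    calc I k y ≤ ∫⁻ x, (spanningSets μ k).indicator (fun _ => (k : ℝ≥0∞) ^ a) x ∂μ := by
          refine lintegral_mono fun x => ?_
          by_cases hx : x ∈ spanningSets μ k
          · simp only [H, hx, Set.indicator_of_mem]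
            gcongr
            exact min_le_right _ _
          · simp [H, hx, ha]
      _ < ∞ := by
          rw [lintegral_indicator (measurableSet_spanningSets μ k), setLIntegral_const]
          exact ENNReal.mul_lt_top (ENNReal.rpow_lt_top_of_nonneg ha.le (ENNReal.natCast_ne_top k)) (measure_spanningSets_lt_top μ k)
  have hHF : ∀ k y x, H k y x ≤ F y x := by
    intro k y x
    by_cases hx : x ∈ spanningSets μ k <;> simp [H, hx]
  have hHmono : ∀ y x, Monotone fun k => H k y x := by
    intro y x k l hkl
    by_cases hx : x ∈ spanningSets μ k
    · have hx' := monotone_spanningSets μ hkl hx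
      simp only [H, hx, hx', Set.indicator_of_mem]
      gcongr
    · simp [H, hx]
  have hHsup : ∀ y x, ⨆ k, H k y x = F y x := by
    intro y x
    refine le_antisymm (iSup_le fun k => hHF k y x) ?_
    refine le_of_forall_lt fun c hc => ?_
    obtain ⟨n, hn⟩ := ENNReal.exists_nat_gt hc.ne_top
    refine lt_of_lt_of_le ?_ (le_iSup _ (max n (spanningSetsIndex μ x)))
    have hx : x ∈ spanningSets μ (max n (spanningSetsIndex μ x)) :=
      monotone_spanningSets μ (le_max_right _ _) (mem_spanningSetsIndex μ x)
    simp only [H, hx, Set.indicator_of_mem, lt_min_iff]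
    refine ⟨hc, hn.trans_le ?_⟩
    exact_mod_cast le_max_left _ _
  refine ⟨fun k y x => ((I k y) ^ (1 / b))⁻¹ * H k y x ^ (a - 1), fun k => ?_, fun k y => ?_,
    fun y => ?_⟩
  · exact (((hIm k).pow_const _).inv.comp measurable_fst).mul ((hHm k).pow_const _)
  · have h1 : ∀ x, (((I k y) ^ (1 / b))⁻¹ * H k y x ^ (a - 1)) ^ b
        = (I k y)⁻¹ * H k y x ^ a := by
      intro x
      rw [ENNReal.mul_rpow_of_nonneg _ _ hb.le, ← ENNReal.inv_rpow, ← ENNReal.rpow_mul,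
        ← ENNReal.rpow_mul, one_div_mul_cancel hb.ne', ENNReal.rpow_one, hab.sub_one_mul_conj]
    simp_rw [h1]
    rw [lintegral_const_mul _ (hHs k y)]
    refine ENNReal.rpow_le_one (ENNReal.inv_mul_le_one _) (by positivity)
  · have h2 : ∀ x, F y x ^ a = ⨆ k, H k y x ^ a := by
      intro x
      rw [← hHsup y x]
      exact (ENNReal.orderIsoRpow a ha).map_iSup _
    simp_rw [h2]
    rw [lintegral_iSup (fun k => hHs k y)
      (fun k l hkl x => ENNReal.rpow_le_rpow (hHmono y x hkl) ha.le)]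
    have h3 := (ENNReal.orderIsoRpow (1 / a) (by positivity)).map_iSup fun k => I k y
    simp only [ENNReal.orderIsoRpow_apply] at h3
    change (⨆ k, I k y) ^ (1 / a) ≤ _
    rw [h3]
    refine iSup_mono fun k => ?_
    by_cases h0 : I k y = 0
    · rw [h0, ENNReal.zero_rpow_of_pos (by positivity)]
      exact zero_le
    calc I k y ^ (1 / a) = ((I k y) ^ (1 / b))⁻¹ * I k y := by
          rw [← ENNReal.rpow_neg]
          conv_rhs => rw [← ENNReal.rpow_one (I k y), ← ENNReal.rpow_mul]
          rw [← ENNReal.rpow_add _ _ h0 (hIfin k y)]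
          congr 1
          have := hab.inv_add_inv_eq_one
          simp only [one_div]
          linarith
      _ = ∫⁻ x, ((I k y) ^ (1 / b))⁻¹ * H k y x ^ a ∂μ := by
          rw [lintegral_const_mul _ (hHs k y)]
      _ ≤ _ := by
          refine lintegral_mono fun x => ?_
          have : H k y x ^ a = H k y x * H k y x ^ (a - 1) := by
            conv_rhs => rw [← ENNReal.rpow_one (H k y x), ← ENNReal.rpow_mul]
            rw [← ENNReal.rpow_add_of_nonneg _ _ zero_le_one (by linarith)]
            congr 1; ring
          simp only
          rw [this, mul_left_comm]
          gcongr
          exact hHF k y x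

lemma LN_DP {X : Type} [MeasurableSpace X] (μ : Measure X) [SigmaFinite μ] {q q' : ℝ≥0∞}
    (hq : 1 ≤ q) (h : 1 / q + 1 / q' = 1) : DP μ (LN q μ) (LN q' μ) where
  hN := LN_FN μ (by positivity)
  hN' := by
    refine LN_FN μ ?_
    rintro rfl
    simp at h
  holder f g hf hg := LN_holder μ hq h f g hf hg
  approx Y _ F hF := by
    rcases conj_cases hq h with ⟨rfl, rfl⟩ | ⟨rfl, rfl⟩ | ⟨h1, h2, h3⟩
    · refine ⟨fun _ _ _ => 1, fun _ => measurable_const, fun _ _ => ?_, fun y => ?_⟩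
      · rw [LN_top]
        exact essSup_le_of_ae_le _ (Eventually.of_forall fun _ => le_rfl)
      · simp [LN_one]
    · exact LN_approx_top μ Y F hF
    · simp only [LN, h1, h2, if_false]
      exact LN_approx_mid μ h3 Y F hF

lemma DP.approx_mono {X : Type} [MeasurableSpace X] {μ : Measure X} [SFinite μ]
    {N N' : (X → ℝ≥0∞) → ℝ≥0∞}
    (h : DP μ N N') (Y : Type) [MeasurableSpace Y] (F : Y → X → ℝ≥0∞)
    (hF : Measurable (Function.uncurry F)) : ∃ G : ℕ → Y → X → ℝ≥0∞,
      (∀ k, Measurable (Function.uncurry (G k))) ∧ (∀ k y, N' (G k y) ≤ 1) ∧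
      (∀ y, Monotone fun k => ∫⁻ x, F y x * G k y x ∂μ) ∧
      ∀ y, N (F y) ≤ ⨆ k, ∫⁻ x, F y x * G k y x ∂μ := by
  obtain ⟨G, hG, hG1, hG2⟩ := h.approx Y F hF
  let I : (Y → X → ℝ≥0∞) → Y → ℝ≥0∞ := fun K y => ∫⁻ x, F y x * K y x ∂μ
  have hI : ∀ K : Y → X → ℝ≥0∞, Measurable (Function.uncurry K) → Measurable (I K) := fun K hK =>
    Measurable.lintegral_prod_right'
      (f := fun z : Y × X => Function.uncurry F z * Function.uncurry K z) (hF.mul hK)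
  classical
  let H : ℕ → Y → X → ℝ≥0∞ := fun k => Nat.rec (G 0)
    (fun k K y => if I K y < I (G (k + 1)) y then G (k + 1) y else K y) k
  have hs : ∀ k y, H (k + 1) y = if I (H k) y < I (G (k + 1)) y then G (k + 1) y else H k y :=
    fun k y => rfl
  have hIs : ∀ k y, I (H (k + 1)) y = max (I (H k) y) (I (G (k + 1)) y) := by
    intro k y
    have : I (H (k + 1)) y = ∫⁻ x, F y x * H (k + 1) y x ∂μ := rfl
    rw [this, hs]
    split_ifs with hc
    · exact (max_eq_right hc.le).symm
    · exact (max_eq_left (not_lt.1 hc)).symm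
  refine ⟨H, ?_, ?_, ?_, ?_⟩
  · intro k
    induction k with
    | zero => exact hG 0
    | succ k ih =>
      have : Function.uncurry (H (k + 1)) = fun z : Y × X =>
          if I (H k) z.1 < I (G (k + 1)) z.1 then Function.uncurry (G (k + 1)) z
          else Function.uncurry (H k) z := by
        ext ⟨y, x⟩
        simp only [Function.uncurry, hs]
        split_ifs <;> rfl
      rw [this]
      refine Measurable.ite ?_ (hG _) ih
      exact measurable_fst (measurableSet_lt (hI _ ih) (hI _ (hG (k + 1))))
  · intro k y
    induction k with
    | zero => exact hG1 0 y
    | succ k ih =>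
      rw [hs]
      split_ifs
      · exact hG1 _ _
      · exact ih
  · intro y
    refine monotone_nat_of_le_succ fun k => ?_
    change I (H k) y ≤ I (H (k + 1)) y
    rw [hIs]
    exact le_max_left _ _
  · intro y
    refine (hG2 y).trans (iSup_mono fun k => ?_)
    change I (G k) y ≤ I (H k) y
    cases k with
    | zero => exact le_rfl
    | succ k => rw [hIs]; exact le_max_right _ _

lemma mM {X : Type} [MeasurableSpace X] {f g : X → ℝ≥0∞} (hf : Measurable f) (hg : Measurable g) :
    Measurable fun x => f x * g x := hf.mul hg

/-- composite norm -/
def cN {X₁ X₂ : Type} (N₁ : (X₁ → ℝ≥0∞) → ℝ≥0∞) (N₂ : (X₂ → ℝ≥0∞) → ℝ≥0∞)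
    (f : X₂ × X₁ → ℝ≥0∞) : ℝ≥0∞ := N₂ fun b => N₁ fun a => f (b, a)

lemma FN.comp {X₁ X₂ : Type} [MeasurableSpace X₁] [MeasurableSpace X₂]
    {N₁ : (X₁ → ℝ≥0∞) → ℝ≥0∞} {N₂ : (X₂ → ℝ≥0∞) → ℝ≥0∞} (h₁ : FN N₁) (h₂ : FN N₂) :
    FN (cN N₁ N₂) where
  mono f g h := h₂.mono _ _ fun b => h₁.mono _ _ fun a => h _
  hom c f hf := by
    refine (h₂.mono _ _ fun b => h₁.hom c _ (hf.comp measurable_prodMk_left)).trans ?_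
    exact h₂.hom c _ (h₁.meas X₂ (fun b a => f (b, a)) hf)
  meas Y _ F hF := by
    refine h₂.meas Y _ ?_
    refine h₁.meas (Y × X₂) (fun z a => F z.1 (z.2, a)) ?_
    exact hF.comp (by fun_prop : Measurable fun z : (Y × X₂) × X₁ => (z.1.1, (z.1.2, z.2)))

lemma DP.comp {X₁ X₂ : Type} [MeasurableSpace X₁] [MeasurableSpace X₂]
    {μ₁ : Measure X₁} {μ₂ : Measure X₂} [SFinite μ₁] [SFinite μ₂]
    {N₁ N₁' : (X₁ → ℝ≥0∞) → ℝ≥0∞} {N₂ N₂' : (X₂ → ℝ≥0∞) → ℝ≥0∞}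
    (h₁ : DP μ₁ N₁ N₁') (h₂ : DP μ₂ N₂ N₂') :
    DP (μ₂.prod μ₁) (cN N₁ N₂) (cN N₁' N₂') where
  hN := h₁.hN.comp h₂.hN
  hN' := h₁.hN'.comp h₂.hN'
  holder f g hf hg := by
    rw [lintegral_prod _ (mM hf hg).aemeasurable]
    refine (lintegral_mono fun b => h₁.holder _ _ (hf.comp measurable_prodMk_left)
      (hg.comp measurable_prodMk_left)).trans ?_
    exact h₂.holder _ _ (h₁.hN.meas X₂ (fun b a => f (b, a)) hf)
      (h₁.hN'.meas X₂ (fun b a => g (b, a)) hg)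
  approx Y _ F hF := by
    have hF1 : Measurable (Function.uncurry fun (z : Y × X₂) (a : X₁) => F z.1 (z.2, a)) :=
      hF.comp (by fun_prop : Measurable fun z : (Y × X₂) × X₁ => (z.1.1, (z.1.2, z.2)))
    obtain ⟨G, hG, hG1, hG2, hG3⟩ := h₁.approx_mono (Y × X₂) (fun z a => F z.1 (z.2, a)) hF1
    obtain ⟨K, hK, hK1, hK2⟩ := h₂.approx Y (fun y b => N₁ fun a => F y (b, a))
      (h₁.hN.meas _ _ hF1)
    have hGs : ∀ i y b, Measurable (G i (y, b)) := fun i y b => (hG i).comp measurable_prodMk_left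
    have hKs : ∀ i y, Measurable (K i y) := fun i y => (hK i).comp measurable_prodMk_left
    have hFs : ∀ y, Measurable (F y) := fun y => hF.comp measurable_prodMk_left
    have hprod : ∀ i j, Measurable (Function.uncurry fun (y : Y) (z : X₂ × X₁) =>
        K j y z.1 * G i (y, z.1) z.2) := by
      intro i j
      exact ((hK j).comp (by fun_prop : Measurable fun z : Y × (X₂ × X₁) => (z.1, z.2.1))).mul
        ((hG i).comp (by fun_prop : Measurable fun z : Y × (X₂ × X₁) => ((z.1, z.2.1), z.2.2)))
    refine ⟨fun k y z => K k.unpair.2 y z.1 * G k.unpair.1 (y, z.1) z.2, fun k => hprod _ _,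
      fun k y => ?_, fun y => ?_⟩
    · refine le_trans (h₂.hN'.mono _ _ fun b => ?_) (hK1 k.unpair.2 y)
      refine (h₁.hN'.hom (K k.unpair.2 y b) _ (hGs k.unpair.1 y b)).trans ?_
      calc _ ≤ K k.unpair.2 y b * 1 := by
            gcongr
            exact hG1 _ _
        _ = _ := mul_one _
    · refine (hK2 y).trans (iSup_le fun j => ?_)
      have hm : ∀ i, Measurable fun b => (∫⁻ a, F y (b, a) * G i (y, b) a ∂μ₁) * K j y b := by
        intro i
        refine Measurable.mul ?_ (hKs j y)
        exact Measurable.lintegral_prod_right'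
          (f := fun z : X₂ × X₁ => F y z * G i (y, z.1) z.2)
          ((hFs y).mul ((hG i).comp
            (by fun_prop : Measurable fun z : X₂ × X₁ => ((y, z.1), z.2))))
      calc ∫⁻ b, (N₁ fun a => F y (b, a)) * K j y b ∂μ₂
          ≤ ∫⁻ b, ⨆ i, (∫⁻ a, F y (b, a) * G i (y, b) a ∂μ₁) * K j y b ∂μ₂ := by
            refine lintegral_mono fun b => ?_
            simp only
            rw [← ENNReal.iSup_mul]
            gcongr
            exact hG3 (y, b)
        _ = ⨆ i, ∫⁻ b, (∫⁻ a, F y (b, a) * G i (y, b) a ∂μ₁) * K j y b ∂μ₂ := by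
            refine lintegral_iSup hm ?_
            intro i i' hii b
            simp only
            exact mul_le_mul_left (hG2 (y, b) hii) _
        _ ≤ _ := by
            refine iSup_le fun i => ?_
            refine le_trans (le_of_eq ?_) (le_iSup _ (Nat.pair i j))
            simp only [Nat.unpair_pair]
            have hmm : Measurable fun z : X₂ × X₁ => F y z * (K j y z.1 * G i (y, z.1) z.2) :=
              mM (hFs y) ((hprod i j).comp (measurable_prodMk_left (x := y)))
            rw [lintegral_prod _ hmm.aemeasurable]
            refine lintegral_congr fun b => ?_
            have hmb : Measurable fun a => F y (b, a) * G i (y, b) a :=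
              mM ((hFs y).comp measurable_prodMk_left) (hGs i y b)
            rw [← lintegral_mul_const _ hmb]
            refine lintegral_congr fun a => ?_
            simp only [Function.comp]
            ring

lemma DP.transport {X X' : Type} [MeasurableSpace X] [MeasurableSpace X']
    {μ : Measure X} {ν : Measure X'} (e : X' ≃ᵐ X) (he : MeasurePreserving e ν μ)
    {N N' : (X → ℝ≥0∞) → ℝ≥0∞} (h : DP μ N N') :
    DP ν (fun f => N fun x => f (e.symm x)) (fun f => N' fun x => f (e.symm x)) := by
  have key : ∀ {M : (X → ℝ≥0∞) → ℝ≥0∞}, FN M → FN (fun f : X' → ℝ≥0∞ => M fun x => f (e.symm x)) := by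
    intro M hM
    refine ⟨fun f g hfg => hM.mono _ _ fun x => hfg _,
      fun c f hf => hM.hom c _ (hf.comp e.symm.measurable), fun Y _ F hF => ?_⟩
    exact hM.meas Y (fun y x => F y (e.symm x))
      (hF.comp (measurable_fst.prodMk (e.symm.measurable.comp measurable_snd)))
  have hint : ∀ f : X' → ℝ≥0∞, ∫⁻ x, f x ∂ν = ∫⁻ x, f (e.symm x) ∂μ := by
    intro f
    exact ((he.symm e).lintegral_comp_emb e.symm.measurableEmbedding f).symm
  refine ⟨key h.hN, key h.hN', fun f g hf hg => ?_, fun Y _ F hF => ?_⟩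
  · rw [hint]
    exact h.holder _ _ (hf.comp e.symm.measurable) (hg.comp e.symm.measurable)
  · obtain ⟨G, h1, h2, h3⟩ := h.approx Y (fun y x => F y (e.symm x))
      (hF.comp (measurable_fst.prodMk (e.symm.measurable.comp measurable_snd)))
    refine ⟨fun k y x => G k y (e x), fun k => ?_, fun k y => ?_, fun y => ?_⟩
    · exact (h1 k).comp (measurable_fst.prodMk (e.measurable.comp measurable_snd))
    · simpa using h2 k y
    · simp_rw [hint]
      simpa using h3 y

lemma mem_herzRing (k : ℤ) (x : ℝ) : x ∈ herzRing k ↔ (2 : ℝ) ^ (k - 1) ≤ |x| ∧ |x| < 2 ^ k := by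
  simp only [herzRing, Set.mem_sdiff, Set.mem_Ioo, ← abs_lt, not_lt]
  exact and_comm

lemma herzRing_meas (k : ℤ) : MeasurableSet (herzRing k) :=
  measurableSet_Ioo.diff measurableSet_Ioo

lemma herzRing_ex {x : ℝ} (hx : x ≠ 0) : ∃ k, x ∈ herzRing k := by
  obtain ⟨n, h1, h2⟩ := exists_mem_Ico_zpow (abs_pos.2 hx) (one_lt_two : (1 : ℝ) < 2)
  exact ⟨n + 1, (mem_herzRing _ _).2 ⟨by simpa using h1, h2⟩⟩

lemma herzRing_unique {x : ℝ} {k l : ℤ} (hk : x ∈ herzRing k) (hl : x ∈ herzRing l) : k = l := by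
  rw [mem_herzRing] at hk hl
  have h1 := (zpow_lt_zpow_iff_right₀ (one_lt_two : (1 : ℝ) < 2)).1 (hk.1.trans_lt hl.2)
  have h2 := (zpow_lt_zpow_iff_right₀ (one_lt_two : (1 : ℝ) < 2)).1 (hl.1.trans_lt hk.2)
  omega

lemma tsum_ring {x : ℝ} {k : ℤ} (hk : x ∈ herzRing k) (h : ℤ → ℝ → ℝ≥0∞) :
    ∑' l, (herzRing l).indicator (h l) x = h k x := by
  rw [tsum_eq_single k]
  · simp [hk]
  · intro l hl
    have : x ∉ herzRing l := fun hx => hl (herzRing_unique hx hk)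
    simp [this]

lemma lintegral_ring (h : ℝ → ℝ≥0∞) (hh : Measurable h) :
    ∫⁻ x, h x = ∑' k, ∫⁻ x, (herzRing k).indicator h x := by
  rw [← lintegral_tsum fun k => (hh.indicator (herzRing_meas k)).aemeasurable]
  refine lintegral_congr_ae ?_
  have : ∀ᵐ x : ℝ, x ≠ 0 := by simp [ae_iff]
  filter_upwards [this] with x hx
  obtain ⟨k, hk⟩ := herzRing_ex hx
  exact (tsum_ring hk fun _ => h).symm

/-- weights -/
def wt (α : ℝ) (k : ℤ) : ℝ≥0∞ := ENNReal.ofReal ((2 : ℝ) ^ ((k : ℝ) * α))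

lemma wt_mul (α : ℝ) (k : ℤ) : wt α k * wt (-α) k = 1 := by
  unfold wt
  rw [← ENNReal.ofReal_mul (by positivity), ← Real.rpow_add (by norm_num)]
  simp

/-- lift to the product -/
def lft (α : ℝ) (g : ℝ → ℝ≥0∞) (z : ℤ × ℝ) : ℝ≥0∞ := wt α z.1 * (herzRing z.1).indicator g z.2

lemma herz_eq (α : ℝ) (p q : ℝ≥0∞) (hq : q ≠ 0) (g : ℝ → ℝ≥0∞) :
    herzNorm1 α p q g = cN (LN q volume) (LN p Measure.count) (lft α g) := by
  have h1 : ∀ a : ℤ → ℝ≥0∞, lpZNorm p a = LN p Measure.count a := by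
    intro a
    unfold lpZNorm LN
    split_ifs
    · simp
    · rw [lintegral_count]
  have h2 : ∀ k, lqNormOn q (herzRing k) g = LN q volume ((herzRing k).indicator g) := by
    intro k
    unfold lqNormOn LN
    split_ifs with hi
    · rfl
    · rw [← lintegral_indicator (herzRing_meas k)]
      congr 2
      ext x
      by_cases hx : x ∈ herzRing k
      · simp [hx]
      · simp [hx, ENNReal.toReal_pos hq hi]
  unfold herzNorm1 cN
  rw [h1]
  congr 1
  ext k
  rw [h2]
  exact (LN_const_mul volume hq (wt α k) _ (Or.inl ENNReal.ofReal_ne_top)).symm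

lemma lift_aux1 {Y : Type} (α : ℝ) (F : Y → ℝ → ℝ≥0∞) (k : ℤ) (x : ℝ) (y : Y) :
    lft α (F y) (k, x) =
      (Prod.snd ⁻¹' (herzRing k)).indicator (fun z => wt α k * Function.uncurry F z) (y, x) := by
  by_cases hx : x ∈ herzRing k <;> simp [lft, hx]

lemma lift_aux2 {Y : Type} [MeasurableSpace Y] (α : ℝ) (F : Y → ℝ → ℝ≥0∞)
    (hF : Measurable (Function.uncurry F)) :
    Measurable fun z : (Y × ℝ) × ℤ => lft α (F z.1.1) (z.2, z.1.2) := by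
  refine measurable_from_prod_countable_left fun k => ?_
  have h2 : (fun z : Y × ℝ => lft α (F z.1) (k, z.2))
      = (Prod.snd ⁻¹' (herzRing k)).indicator (fun z => wt α k * Function.uncurry F z) := by
    ext ⟨y, x⟩
    exact lift_aux1 α F k x y
  change Measurable (fun z : Y × ℝ => lft α (F z.1) (k, z.2))
  rw [h2]
  exact (mM measurable_const hF).indicator (measurable_snd (herzRing_meas k))

lemma lift_aux3 {Y : Type} [MeasurableSpace Y] :
    Measurable fun z : Y × (ℤ × ℝ) => ((z.1, z.2.2), z.2.1) := by fun_prop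

lemma herz_lift_meas' {Y : Type} [MeasurableSpace Y] (α : ℝ) (F : Y → ℝ → ℝ≥0∞)
    (hF : Measurable (Function.uncurry F)) :
    Measurable (fun z : Y × (ℤ × ℝ) => lft α (F z.1) z.2) := by
  have h := (lift_aux2 α F hF).comp lift_aux3
  unfold Function.comp at h
  exact h

lemma herz_lift_meas {Y : Type} [MeasurableSpace Y] (α : ℝ) (F : Y → ℝ → ℝ≥0∞)
    (hF : Measurable (Function.uncurry F)) :
    Measurable (Function.uncurry fun (y : Y) => lft α (F y)) := by
  have h := herz_lift_meas' α F hF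
  unfold Function.uncurry
  exact h

lemma lft_meas (β : ℝ) (f : ℝ → ℝ≥0∞) (hf : Measurable f) : Measurable (lft β f) := by
  have h1 := herz_lift_meas' (Y := Unit) β (fun _ => f) (hf.comp measurable_snd)
  have h2 : Measurable fun z : ℤ × ℝ => ((), z) := measurable_prodMk_left
  have h3 := h1.comp h2
  unfold Function.comp at h3
  exact h3

lemma herz_FN (α : ℝ) {p q : ℝ≥0∞} (hp : p ≠ 0) (hq : q ≠ 0) : FN (herzNorm1 α p q) := by
  have h := (LN_FN (volume : Measure ℝ) hq).comp (LN_FN (Measure.count : Measure ℤ) hp)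
  refine ⟨fun f g hfg => ?_, fun c f hf => ?_, fun Y _ F hF => ?_⟩
  · rw [herz_eq _ _ _ hq, herz_eq _ _ _ hq]
    refine h.mono _ _ fun z => ?_
    unfold lft
    gcongr
    exact hfg _
  · rw [herz_eq _ _ _ hq, herz_eq _ _ _ hq]
    refine le_trans (le_of_eq ?_) (h.hom c _ (lft_meas α f hf))
    congr 1; ext ⟨k, x⟩
    by_cases hx : x ∈ herzRing k
    · simp [lft, hx, mul_left_comm]
    · simp [lft, hx]
  · simp_rw [herz_eq _ _ _ hq]
    exact h.meas Y _ (herz_lift_meas α F hF)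

lemma herz_DP (α : ℝ) {p q p' q' : ℝ≥0∞} (hp : 1 ≤ p) (hq : 1 ≤ q)
    (hpp : 1 / p + 1 / p' = 1) (hqq : 1 / q + 1 / q' = 1) :
    DP volume (herzNorm1 α p q) (herzNorm1 (-α) p' q') := by
  have hp0 : p ≠ 0 := by positivity
  have hq0 : q ≠ 0 := by positivity
  have hp'0 : p' ≠ 0 := by rintro rfl; simp at hpp
  have hq'0 : q' ≠ 0 := by rintro rfl; simp at hqq
  have h := (LN_DP (volume : Measure ℝ) hq hqq).comp (LN_DP (Measure.count : Measure ℤ) hp hpp)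
  refine ⟨herz_FN _ hp0 hq0, herz_FN _ hp'0 hq'0, fun f g hf hg => ?_, fun Y _ F hF => ?_⟩
  · rw [herz_eq _ _ _ hq0, herz_eq _ _ _ hq'0]
    refine le_trans (le_of_eq ?_) (h.holder _ _ (lft_meas α f hf) (lft_meas (-α) g hg))
    rw [lintegral_prod _ (mM (lft_meas α f hf) (lft_meas (-α) g hg)).aemeasurable, lintegral_count,
      lintegral_ring _ (mM hf hg)]
    congr 1; ext k
    refine lintegral_congr fun x => ?_
    by_cases hx : x ∈ herzRing k
    · simp only [lft, hx, Set.indicator_of_mem]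
      rw [mul_mul_mul_comm, wt_mul, one_mul]
    · simp [lft, hx]
  · obtain ⟨G, hG, hG1, hG2⟩ := h.approx Y _ (herz_lift_meas α F hF)
    have hKm : ∀ i, Measurable (Function.uncurry fun (y : Y) (x : ℝ) =>
        ∑' k, (herzRing k).indicator (fun x => wt α k * G i y (k, x)) x) := by
      intro i
      refine Measurable.tsum fun k => ?_
      have : (fun z : Y × ℝ => (herzRing k).indicator (fun x => wt α k * G i z.1 (k, x)) z.2)
        = (Prod.snd ⁻¹' (herzRing k)).indicator
          (fun z => wt α k * Function.uncurry (G i) (z.1, (k, z.2))) := by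
        ext ⟨y, x⟩
        by_cases hx : x ∈ herzRing k <;> simp [hx]
      rw [this]
      refine Measurable.indicator ?_ (measurable_snd (herzRing_meas k))
      exact ((hG i).comp (by fun_prop : Measurable fun z : Y × ℝ => (z.1, (k, z.2)))).const_mul _
    refine ⟨fun i y x => ∑' k, (herzRing k).indicator (fun x => wt α k * G i y (k, x)) x, hKm,
      fun i y => ?_, fun y => ?_⟩
    · rw [herz_eq _ _ _ hq'0]
      refine le_trans ?_ (hG1 i y)
      refine h.hN'.mono _ _ ?_
      rintro ⟨k, x⟩
      by_cases hx : x ∈ herzRing k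
      · simp only [lft, hx, Set.indicator_of_mem]
        rw [tsum_ring hx fun k x => wt α k * G i y (k, x), ← mul_assoc, mul_comm (wt (-α) k),
          wt_mul, one_mul]
      · simp [lft, hx]
    · rw [herz_eq _ _ _ hq0]
      refine (hG2 y).trans (iSup_mono fun i => le_of_eq ?_)
      have hFy : Measurable (F y) := hF.comp measurable_prodMk_left
      have hGy : Measurable (G i y) := (hG i).comp measurable_prodMk_left
      have hmx : Measurable fun x => F y x *
          ∑' k, (herzRing k).indicator (fun x => wt α k * G i y (k, x)) x :=
        mM hFy ((hKm i).comp (measurable_prodMk_left (x := y)))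
      rw [lintegral_prod _ (mM (lft_meas α (F y) hFy) hGy).aemeasurable, lintegral_count,
        lintegral_ring _ hmx]
      congr 1; ext k
      refine lintegral_congr fun x => ?_
      by_cases hx : x ∈ herzRing k
      · simp only [lft, hx, Set.indicator_of_mem]
        rw [tsum_ring hx fun k x => wt α k * G i y (k, x)]
        ring
      · simp [lft, hx]

lemma mixed_DP : ∀ (n : ℕ) (α : Fin n → ℝ) (p q p' q' : Fin n → ℝ≥0∞)
    (_ : ∀ i, 1 ≤ p i) (_ : ∀ i, 1 ≤ q i)
    (_ : ∀ i, 1 / p i + 1 / p' i = 1) (_ : ∀ i, 1 / q i + 1 / q' i = 1),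
    DP volume (mixedHerzNormE n α p q) (mixedHerzNormE n (-α) p' q')
  | 0, α, p, q, p', q', _, _, _, _ => by
    have key : FN (fun f : (Fin 0 → ℝ) → ℝ≥0∞ => f fun i => i.elim0) :=
      ⟨fun f g h => h _, fun c f _ => le_rfl, fun Y _ F hF =>
        hF.comp (measurable_id.prodMk measurable_const)⟩
    have hi : ∀ f : (Fin 0 → ℝ) → ℝ≥0∞, ∫⁻ x, f x = f fun i => i.elim0 := by
      intro f
      rw [lintegral_unique]
      have : (volume : Measure (Fin 0 → ℝ)) Set.univ = 1 := by simp [volume_pi]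
      rw [this, mul_one]
      congr 1
    refine ⟨key, key, fun f g _ _ => ?_, fun Y _ F hF => ?_⟩
    · rw [hi]
      exact le_rfl
    · refine ⟨fun _ _ _ => 1, fun _ => measurable_const, fun _ _ => le_rfl, fun y => ?_⟩
      simp only [hi, mul_one, ciSup_const]
      exact le_rfl
  | n + 1, α, p, q, p', q', hp, hq, hp', hq' => by
    have h1 := mixed_DP n (Fin.init α) (Fin.init p) (Fin.init q) (Fin.init p') (Fin.init q')
      (fun i => hp _) (fun i => hq _) (fun i => hp' _) (fun i => hq' _)
    have h2 := herz_DP (α (Fin.last n)) (hp (Fin.last n)) (hq (Fin.last n)) (hp' (Fin.last n))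
      (hq' (Fin.last n))
    have h3 := (h1.comp h2).transport _
      (volume_preserving_piFinSuccAbove (fun _ : Fin (n + 1) => ℝ) (Fin.last n))
    have he : ∀ (b : ℝ) (a : Fin n → ℝ),
        (MeasurableEquiv.piFinSuccAbove (fun _ : Fin (n + 1) => ℝ) (Fin.last n)).symm (b, a)
          = Fin.snoc a b := by
      intro b a
      exact Fin.insertNth_last (α := fun _ => ℝ) b a
    unfold cN at h3
    simp only [he] at h3
    exact h3

/-- the norm duality formula for mixed-norm Herz spaces. -/
theorem mixedHerz_norm_dual (n : ℕ) (α : Fin n → ℝ) (p q p' q' : Fin n → ℝ≥0∞)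
    (hp : ∀ i, 1 ≤ p i) (hq : ∀ i, 1 ≤ q i)
    (hp' : ∀ i, 1 / p i + 1 / p' i = 1) (hq' : ∀ i, 1 / q i + 1 / q' i = 1)
    (f : (Fin n → ℝ) → ℂ) (hf : Measurable f) (hfin : herzNormC n α p q f ≠ ∞) :
    herzNormC n α p q f =
      ⨆ (g : (Fin n → ℝ) → ℂ) (_ : Measurable g) (_ : herzNormC n (-α) p' q' g = 1),
        ∫⁻ x, (‖f x * g x‖₊ : ℝ≥0∞) := by
  have h := mixed_DP n α p q p' q' hp hq hp' hq'
  have hnf : Measurable fun x => (‖f x‖₊ : ℝ≥0∞) := hf.nnnorm.coe_nnreal_ennreal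
  have hmul : ∀ g : (Fin n → ℝ) → ℂ, ∫⁻ x, (‖f x * g x‖₊ : ℝ≥0∞)
      = ∫⁻ x, (‖f x‖₊ : ℝ≥0∞) * (‖g x‖₊ : ℝ≥0∞) := by
    intro g
    simp
  simp_rw [hmul]
  refine le_antisymm ?_ ?_
  · obtain ⟨G, hG, hG1, hG2⟩ := h.approx Unit (fun _ x => (‖f x‖₊ : ℝ≥0∞)) (hnf.comp measurable_snd)
    refine (hG2 ()).trans (iSup_le fun k => ?_)
    have hGm : Measurable (G k ()) := (hG k).comp measurable_prodMk_left
    have hG1 := hG1 k ()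
    generalize G k () = u at hGm hG1
    have hsup : ∀ x, (‖f x‖₊ : ℝ≥0∞) * u x = ⨆ m : ℕ, (‖f x‖₊ : ℝ≥0∞) * min (u x) m := by
      intro x
      rw [← ENNReal.mul_iSup]
      congr 1
      refine le_antisymm (le_of_forall_lt fun c hc => ?_) (iSup_le fun m => min_le_left _ _)
      obtain ⟨m, hm⟩ := ENNReal.exists_nat_gt hc.ne_top
      exact (lt_min hc hm).trans_le (le_iSup (fun m : ℕ => min (u x) m) m)
    simp only [hsup]
    rw [lintegral_iSup (fun m => mM hnf (hGm.min measurable_const))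
      (fun m l hml x => by
        simp only
        gcongr)]
    refine iSup_le fun m => ?_
    set v : (Fin n → ℝ) → ℝ≥0∞ := fun x => min (u x) m with hv
    have hvm : Measurable v := hGm.min measurable_const
    have hvfin : ∀ x, v x ≠ ∞ := fun x =>
      ((min_le_right _ _).trans_lt (ENNReal.natCast_lt_top m)).ne
    have hv1 : mixedHerzNormE n (-α) p' q' v ≤ 1 :=
      (h.hN'.mono _ _ fun x => min_le_left _ _).trans hG1
    set c := mixedHerzNormE n (-α) p' q' v with hc
    by_cases hc0 : c = 0
    · refine (h.holder _ _ hnf hvm).trans ?_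
      rw [← hc, hc0, mul_zero]
      exact zero_le
    have hcfin : c ≠ ∞ := (hv1.trans_lt ENNReal.one_lt_top).ne
    have hcv : ∀ x, c⁻¹ * v x ≠ ∞ := fun x =>
      ENNReal.mul_ne_top (ENNReal.inv_ne_top.2 hc0) (hvfin x)
    let g : (Fin n → ℝ) → ℂ := fun x => (((c⁻¹ * v x).toReal : ℝ) : ℂ)
    have hg : ∀ x, (‖g x‖₊ : ℝ≥0∞) = c⁻¹ * v x := by
      intro x
      have : ‖g x‖₊ = (c⁻¹ * v x).toNNReal := by
        ext
        simp only [g, coe_nnnorm, Complex.norm_real, Real.norm_eq_abs, abs_of_nonneg toReal_nonneg]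
        rfl
      rw [this, ENNReal.coe_toNNReal (hcv x)]
    have hgm : Measurable g :=
      Complex.measurable_ofReal.comp (hvm.const_mul _).ennreal_toReal
    have hg1 : herzNormC n (-α) p' q' g = 1 := by
      unfold herzNormC
      simp only [hg]
      refine le_antisymm ?_ ?_
      · refine (h.hN'.hom _ _ hvm).trans ?_
        exact ENNReal.inv_mul_le_one _
      · have h4 := h.hN'.hom c _ (hvm.const_mul c⁻¹)
        have h5 : (fun x => c * (c⁻¹ * v x)) = v := by
          ext x
          rw [← mul_assoc, ENNReal.mul_inv_cancel hc0 hcfin, one_mul]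
        rw [h5, ← hc] at h4
        by_contra hlt
        rw [not_le] at hlt
        have h6 := ENNReal.mul_lt_mul_right hc0 hcfin hlt
        rw [mul_one] at h6
        exact absurd h4 (not_le.2 h6)
    refine le_trans ?_ (le_iSup_of_le g (le_iSup_of_le hgm (le_iSup_of_le hg1 le_rfl)))
    refine lintegral_mono fun x => ?_
    simp only [hg]
    gcongr
    calc v x = 1 * v x := (one_mul _).symm
      _ ≤ c⁻¹ * v x := by
        gcongr
        exact ENNReal.one_le_inv.2 hv1
  · refine iSup_le fun g => iSup_le fun hg => iSup_le fun hg1 => ?_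
    refine (h.holder _ _ hnf hg.nnnorm.coe_nnreal_ennreal).trans ?_
    unfold herzNormC at hg1 ⊢
    rw [hg1, mul_one]
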